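/- For a pure input state ρ₀ = |ψ₀⟩⟨ψ₀| and canonical Kraus operators Υ_k(θ) with Υ_k(θ)ψ₀ = √(p_k(θ)) w_k(θ) for an orthonormal family w_k, the quantity 4 Σ_k ⟨ψ₀|Υ_k'(θ)†Υ_k'(θ)|ψ₀⟩ equals Σ_{k:p_k≠0} (p_k')²/p_k + 4 Σ_{k:p_k≠0} p_k ⟨w_k'|w_k'⟩, provided p_k(θ)=0 implies Υ_k'(θ)ψ₀ = 0. -/

import Mathlib

/-! On the support of `p_k`, the vector `Υ_k'ψ₀` is the combination `a w_k + b w_k'` with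
`a = p_k' / (2√p_k)` and `b = √p_k` real. Expanding its squared norm gives
`a² + a b (⟨w_k'|w_k⟩ + ⟨w_k|w_k'⟩) + b² ⟨w_k'|w_k'⟩`. The cross term vanishes because
`⟨w_k|w_k⟩ = 1` is constant in `θ` (`deriv_cross_eq_zero`), while `4a² = (p_k')²/p_k` and `b² = p_k`.
Off the support both sides contribute zero. -/

open Matrix

/-- A differentiable curve of unit vectors satisfies `⟨u'|u⟩ + ⟨u|u'⟩ = 0`. -/
lemma deriv_cross_eq_zero {d : ℕ} {u : ℝ → Fin d → ℂ} (hu : Differentiable ℝ u)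
    (hunit : ∀ t, star (u t) ⬝ᵥ u t = 1) (t : ℝ) :
    star (deriv u t) ⬝ᵥ u t + star (u t) ⬝ᵥ deriv u t = 0 := by
  have hcoord : ∀ i, HasDerivAt (fun s => u s i) (deriv u t i) t :=
    hasDerivAt_pi.1 (hu t).hasDerivAt
  have hsum : HasDerivAt (fun s => ∑ i, star (u s i) * u s i)
      (∑ i, (star (deriv u t i) * u t i + star (u t i) * deriv u t i)) t :=
    HasDerivAt.fun_sum fun i _ => (hcoord i).star.mul (hcoord i)
  have hconst : (fun s => ∑ i, star (u s i) * u s i) = fun _ => (1 : ℂ) :=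
    funext hunit
  rw [hconst] at hsum
  have h := hsum.unique (hasDerivAt_const t (1 : ℂ))
  rwa [Finset.sum_add_distrib] at h

/-- For a pure input state `ρ₀ = |ψ₀⟩⟨ψ₀|` and canonical Kraus operators with
`Υ_k(θ)ψ₀ = √(p_k(θ)) w_k(θ)` for an orthonormal family `w_k`, the quantity
`4 Σ_k ⟨ψ₀|Υ_k'(θ)†Υ_k'(θ)|ψ₀⟩` equals
`Σ_{k:p_k≠0} (p_k')²/p_k + 4 Σ_{k:p_k≠0} p_k ⟨w_k'|w_k'⟩`,
provided `p_k(θ) = 0` implies `Υ_k'(θ)ψ₀ = 0`. -/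
theorem stmt11 {d n : ℕ} (ψ₀ : Fin d → ℂ) (hψ₀ : star ψ₀ ⬝ᵥ ψ₀ = 1)
    (p : Fin n → ℝ → ℝ) (w : Fin n → ℝ → Fin d → ℂ)
    (Υ Υ' : Fin n → ℝ → Matrix (Fin d) (Fin d) ℂ)
    (hpdiff : ∀ k, Differentiable ℝ (p k))
    (hwdiff : ∀ k, Differentiable ℝ (w k))
    (hpnonneg : ∀ k θ, 0 ≤ p k θ)
    (horth : ∀ θ : ℝ, ∀ j k : Fin n,
      star (w j θ) ⬝ᵥ w k θ = if j = k then 1 else 0)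
    (hΥ : ∀ k θ, Υ k θ *ᵥ ψ₀ = ((Real.sqrt (p k θ) : ℝ) : ℂ) • w k θ)
    (θ : ℝ)
    (hΥ'pos : ∀ k, 0 < p k θ → Υ' k θ *ᵥ ψ₀
      = ((deriv (p k) θ / (2 * Real.sqrt (p k θ)) : ℝ) : ℂ) • w k θ
        + ((Real.sqrt (p k θ) : ℝ) : ℂ) • deriv (w k) θ)
    (hΥ'zero : ∀ k, p k θ = 0 → Υ' k θ *ᵥ ψ₀ = 0) :
    4 * ∑ k, star (Υ' k θ *ᵥ ψ₀) ⬝ᵥ (Υ' k θ *ᵥ ψ₀)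
      = ((∑ k, if p k θ ≠ 0 then (deriv (p k) θ) ^ 2 / p k θ else 0 : ℝ) : ℂ)
        + 4 * ∑ k, if p k θ ≠ 0 then
            ((p k θ : ℝ) : ℂ) * (star (deriv (w k) θ) ⬝ᵥ deriv (w k) θ) else 0 := by
  rw [Complex.ofReal_sum, Finset.mul_sum, Finset.mul_sum, ← Finset.sum_add_distrib]
  refine Finset.sum_congr rfl fun k _ => ?_
  by_cases hk : p k θ = 0
  · simp [hk, hΥ'zero k hk]
  have hpos : 0 < p k θ := lt_of_le_of_ne (hpnonneg k θ) (Ne.symm hk)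
  have hunit : ∀ t, star (w k t) ⬝ᵥ w k t = 1 := fun t => by simp [horth t k k]
  have hcross := deriv_cross_eq_zero (hwdiff k) hunit θ
  rw [hΥ'pos k hpos, if_pos hk, if_pos hk]
  set a : ℝ := deriv (p k) θ / (2 * Real.sqrt (p k θ)) with ha
  set b : ℝ := Real.sqrt (p k θ) with hb
  have hbsq : b ^ 2 = p k θ := Real.sq_sqrt hpos.le
  have hasq : deriv (p k) θ ^ 2 / p k θ = 4 * a ^ 2 := by
    rw [ha, div_pow, mul_pow, hbsq]
    field_simp
    norm_num
  rw [hasq, ← hbsq]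
  simp only [star_add, star_smul, add_dotProduct, dotProduct_add, smul_dotProduct,
    dotProduct_smul, smul_eq_mul, hunit θ, Complex.star_def, Complex.conj_ofReal]
  push_cast
  linear_combination 4 * (a : ℂ) * (b : ℂ) * hcross
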